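/- Solvability of the characterizing equations: let X ∈ M^ψ with X ≥ 0 a.s., let φ satisfy the Δ₂-condition, and suppose the infimum in ρ_{φ,β}(X) = inf_{μ∈ℝ, t>0} t·(β + μ + E[ψ(X/t − μ)]) is attained at t* > 0 and μ* ∈ ℝ. If ψ is differentiable, then t* and μ* solve E[ψ′(X/t* − μ*)] = 1 and E[φ(ψ′(X/t* − μ*))] = β with ψ′ the derivative of ψ. If instead X is continuously distributed (P(X = x) = 0 for every x ∈ ℝ), then t* and μ* solve these two equations for every subderivative ψ′ of ψ (i.e., every ψ′ : ℝ → ℝ with ψ′(x)·(z − x) ≤ ψ(z) − ψ(x) for all x, z ∈ ℝ). -/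

import Mathlib

open MeasureTheory
open scoped ENNReal

noncomputable section

/-- A divergence function: convex, lower semicontinuous `φ : ℝ → ℝ ∪ {∞}` with `φ 1 = 0`,
effective domain `[0, ∞)` and superlinear growth `φ x / x → ∞` as `x → ∞`. -/
structure IsDivergenceFunction (φ : ℝ → EReal) : Prop where
  convex : ∀ x y a b : ℝ, 0 < a → 0 < b → a + b = 1 →
    φ (a * x + b * y) ≤ (a : EReal) * φ x + (b : EReal) * φ y
  lsc : LowerSemicontinuous φ
  ne_bot : ∀ x : ℝ, φ x ≠ ⊥
  one : φ 1 = 0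
  domain : ∀ x : ℝ, φ x ≠ ⊤ ↔ 0 ≤ x
  superlinear : ∀ M : ℝ, ∃ N : ℝ, ∀ x : ℝ, N ≤ x → ((M * x : ℝ) : EReal) ≤ φ x

/-- The convex conjugate `ψ(y) = sup_z (y·z − φ(z))`, as an extended real number. -/
def psiE (φ : ℝ → EReal) (y : ℝ) : EReal := ⨆ z : ℝ, (((y * z : ℝ) : EReal) - φ z)

/-- The convex conjugate, as a real number (it is finite for divergence functions). -/
def psiR (φ : ℝ → EReal) (y : ℝ) : ℝ := (psiE φ y).toReal

open Classical in
/-- The objective `t (β + μ + E ψ(X/t − μ))` of the φ-divergence risk measure;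
the value is `⊤` when `ψ(X/t − μ)` fails to be integrable. -/
def rhoObj {Ω : Type*} [MeasurableSpace Ω] (φ : ℝ → EReal) (β : ℝ) (P : Measure Ω)
    (X : Ω → ℝ) (μ t : ℝ) : EReal :=
  if Integrable (fun ω => psiR φ (X ω / t - μ)) P then
    (((t * (β + μ + ∫ ω, psiR φ (X ω / t - μ) ∂P)) : ℝ) : EReal)
  else ⊤

/-- The φ-divergence risk measure `ρ_{φ,β}(X) = inf_{μ ∈ ℝ, t > 0} t (β + μ + E ψ(X/t − μ))`. -/
def rhoDiv {Ω : Type*} [MeasurableSpace Ω] (φ : ℝ → EReal) (β : ℝ) (P : Measure Ω)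
    (X : Ω → ℝ) : EReal :=
  ⨅ (μ : ℝ) (t : ℝ) (_ : 0 < t), rhoObj φ β P X μ t

/-- The Δ₂-condition: `φ(2x) ≤ k·φ(x)` for all `x > T`, for some `T, k ≥ 0`. -/
def DeltaTwo (φ : ℝ → EReal) : Prop :=
  ∃ T k : ℝ, 0 ≤ T ∧ 0 ≤ k ∧ ∀ x : ℝ, T < x → φ (2 * x) ≤ (k : EReal) * φ x
variable {Ω : Type*} [MeasurableSpace Ω]

/-!
Write `Y = X / t - μ` and let `v` be the value of the infimum. Multiplying the objective by
`s = 1 / t` turns optimality into the affine bound `v * s ≤ β + m + E[ψ (X * s - m)]`, valid for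
all `m` and all `s > 0`, with equality at `s = 1 / t`, `m = μ`. Since `ψ` is convex, its difference
quotients are dominated by integrable ones, so the right-hand side may be differentiated under the
expectation as soon as `ψ` is almost surely differentiable at `Y`. Stationarity in `m` reads
`E[ψ' Y] = 1`, stationarity in `s` reads `E[ψ' Y * X] = v`, and the equality case
`φ (ψ' Y) = Y * ψ' Y - ψ Y` of the Fenchel–Young inequality turns these two into
`E[φ (ψ' Y)] = v / t - μ - E[ψ Y] = β`.

When `X` has no atoms, almost sure differentiability holds because a subderivative is monotone,
hence continuous off a countable set, and `ψ` is differentiable wherever a subderivative is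
continuous.
-/

section Subderivative

/-- `m` is a subgradient of `f` at `x`: the line of slope `m` through `(x, f x)` supports the
graph of `f` from below. -/
def IsSubgradientAt (f : ℝ → ℝ) (m x : ℝ) : Prop :=
  ∀ z, m * (z - x) ≤ f z - f x

/-- `g` is a subderivative of `f : ℝ → ℝ`: it selects a subgradient of `f` at every point. Such
a `g` exists only if `f` is convex. -/
def IsSubderivative (f g : ℝ → ℝ) : Prop :=
  ∀ x, IsSubgradientAt f (g x) x

variable {f g : ℝ → ℝ}

lemma IsSubgradientAt.eq_deriv {m x : ℝ} (hm : IsSubgradientAt f m x)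
    (hf : DifferentiableAt ℝ f x) : m = deriv f x := by
  have hmin : IsLocalMin (fun z => f z - z * m) x :=
    .of_forall fun z => by linarith [hm z]
  have hzero := hmin.hasDerivAt_eq_zero (hf.hasDerivAt.sub (hasDerivAt_mul_const m))
  linarith

namespace IsSubderivative

lemma hasDerivAt (hg : IsSubderivative f g) {x : ℝ} (hf : DifferentiableAt ℝ f x) :
    HasDerivAt f (g x) x :=
  (hg x).eq_deriv hf ▸ hf.hasDerivAt

lemma monotone (hg : IsSubderivative f g) : Monotone g := by
  intro x z hxz
  rcases hxz.eq_or_lt with rfl | hlt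
  · exact le_rfl
  · refine le_of_mul_le_mul_right ?_ (sub_pos.2 hlt)
    linarith [hg x z, hg z x]

lemma differentiableAt_of_continuousAt (hg : IsSubderivative f g) {x : ℝ}
    (hx : ContinuousAt g x) : DifferentiableAt ℝ f x := by
  suffices HasDerivAt f (g x) x from this.differentiableAt
  rw [hasDerivAt_iff_isLittleO, Asymptotics.isLittleO_iff]
  intro c hc
  filter_upwards [Metric.continuousAt_iff'.1 hx c hc] with z hz
  have hgap : (g z - g x) * (z - x) ≤ c * |z - x| := by
    grw [le_abs_self ((g z - g x) * (z - x)), abs_mul, ← Real.dist_eq, hz]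
  rw [smul_eq_mul, Real.norm_eq_abs, Real.norm_eq_abs, abs_of_nonneg] <;>
    linarith [hg x z, hg z x]

lemma countable_not_differentiableAt (hg : IsSubderivative f g) :
    {x | ¬ DifferentiableAt ℝ f x}.Countable :=
  hg.monotone.countable_not_continuousAt.mono fun _ hx hc =>
    hx (hg.differentiableAt_of_continuousAt hc)

lemma comp_add_mul (hg : IsSubderivative f g) (y z : ℝ) :
    IsSubderivative (fun s => f (y + s * z)) (fun s => g (y + s * z) * z) := fun a b => by
  linarith [hg (y + a * z) (y + b * z)]

lemma abs_le_of_mem_Icc (hg : IsSubderivative f g) {a b x : ℝ} (hx : x ∈ Set.Icc a b) :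
    |g x| ≤ |f (b + 1) - f b| + |f (a - 1) - f a| := by
  have hupper : g x ≤ f (b + 1) - f b := by linarith [hg.monotone hx.2, hg b (b + 1)]
  have hlower : f a - f (a - 1) ≤ g x := by linarith [hg.monotone hx.1, hg a (a - 1)]
  rw [abs_le]
  constructor <;>
    linarith [le_abs_self (f (b + 1) - f b), le_abs_self (f (a - 1) - f a),
      abs_nonneg (f (b + 1) - f b), abs_nonneg (f (a - 1) - f a)]

lemma lipschitzOnWith_Icc (hg : IsSubderivative f g) (a b : ℝ) :
    LipschitzOnWith (Real.nnabs (|f (b + 1) - f b| + |f (a - 1) - f a|)) f (Set.Icc a b) := by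
  refine LipschitzOnWith.of_le_add_mul _ fun x hx z _ => ?_
  rw [Real.coe_nnabs, abs_of_nonneg (by positivity), Real.dist_eq]
  have hslope : g x * (x - z) ≤ (|f (b + 1) - f b| + |f (a - 1) - f a|) * |x - z| := by
    grw [le_abs_self (g x * (x - z)), abs_mul, hg.abs_le_of_mem_Icc hx]
  linarith [hg x z]

end IsSubderivative

end Subderivative

section Expectation

variable {P : Measure Ω} {f g : ℝ → ℝ} {X Y Z : Ω → ℝ}

lemma IsSubderivative.hasDerivAt_integral_add_mul (hg : IsSubderivative f g)
    (hY : AEMeasurable Y P) (hZ : AEMeasurable Z P)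
    (hint : ∀ s : ℝ, Integrable (fun ω => f (Y ω + s * Z ω)) P)
    (hd : ∀ᵐ ω ∂P, DifferentiableAt ℝ f (Y ω)) :
    Integrable (fun ω => g (Y ω) * Z ω) P ∧
      HasDerivAt (fun s : ℝ => ∫ ω, f (Y ω + s * Z ω) ∂P) (∫ ω, g (Y ω) * Z ω ∂P) 0 := by
  refine hasDerivAt_integral_of_dominated_loc_of_lip (Icc_mem_nhds (by norm_num) (by norm_num))
    (.of_forall fun s => (hint s).aestronglyMeasurable) (hint 0)
    ((hg.monotone.measurable.comp_aemeasurable hY).mul hZ).aestronglyMeasurable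
    (.of_forall fun ω => (hg.comp_add_mul (Y ω) (Z ω)).lipschitzOnWith_Icc (-1) 1)
    (((hint _).sub (hint _)).abs.add ((hint _).sub (hint _)).abs) ?_
  filter_upwards [hd] with ω hω
  have hline : HasDerivAt (fun s : ℝ => Y ω + s * Z ω) (Z ω) 0 :=
    (hasDerivAt_mul_const (Z ω)).const_add (Y ω)
  exact (hg.hasDerivAt hω).comp_of_eq 0 hline (by simp)

lemma IsSubderivative.integral_mul_eq_of_isLocalMin (hg : IsSubderivative f g)
    (hY : AEMeasurable Y P) (hZ : AEMeasurable Z P)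
    (hint : ∀ s : ℝ, Integrable (fun ω => f (Y ω + s * Z ω)) P)
    (hd : ∀ᵐ ω ∂P, DifferentiableAt ℝ f (Y ω)) {c : ℝ}
    (hmin : IsLocalMin (fun s : ℝ => ∫ ω, f (Y ω + s * Z ω) ∂P - s * c) 0) :
    Integrable (fun ω => g (Y ω) * Z ω) P ∧ ∫ ω, g (Y ω) * Z ω ∂P = c := by
  obtain ⟨hgZ, hderiv⟩ := hg.hasDerivAt_integral_add_mul hY hZ hint hd
  exact ⟨hgZ, sub_eq_zero.1 (hmin.hasDerivAt_eq_zero (hderiv.sub (hasDerivAt_mul_const c)))⟩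

lemma ae_div_sub_notMem_of_countable (hX : ∀ x : ℝ, P {ω | X ω = x} = 0) {t : ℝ} (ht : t ≠ 0)
    (μ : ℝ) {S : Set ℝ} (hS : S.Countable) : ∀ᵐ ω ∂P, X ω / t - μ ∉ S := by
  have hne : ∀ᵐ ω ∂P, ∀ c ∈ S, X ω ≠ (c + μ) * t :=
    (ae_ball_iff hS).2 fun c _ => by simpa [ae_iff] using hX ((c + μ) * t)
  filter_upwards [hne] with ω hω hmem
  exact hω _ hmem (by field_simp; ring)

lemma IsSubderivative.ae_differentiableAt_div_sub (hg : IsSubderivative f g)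
    (hX : ∀ x : ℝ, P {ω | X ω = x} = 0) {t : ℝ} (ht : t ≠ 0) (μ : ℝ) :
    ∀ᵐ ω ∂P, DifferentiableAt ℝ f (X ω / t - μ) :=
  (ae_div_sub_notMem_of_countable hX ht μ hg.countable_not_differentiableAt).mono fun _ =>
    not_not.1

end Expectation

namespace IsDivergenceFunction

variable {φ : ℝ → EReal} (hφ : IsDivergenceFunction φ)
include hφ

lemma coe_toReal {w : ℝ} (hw : 0 ≤ w) : ((φ w).toReal : EReal) = φ w :=
  EReal.coe_toReal ((hφ.domain w).2 hw) (hφ.ne_bot w)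

lemma eq_top_of_neg {w : ℝ} (hw : w < 0) : φ w = ⊤ :=
  not_not.1 fun h => hw.not_ge ((hφ.domain w).1 h)

lemma toReal_one : (φ 1).toReal = 0 := by
  rw [hφ.one, EReal.toReal_zero]

lemma lowerSemicontinuousOn_toReal :
    LowerSemicontinuousOn (fun w => (φ w).toReal) (Set.Ici 0) := by
  intro w hw c hc
  have hlt : (c : EReal) < φ w := by rwa [← hφ.coe_toReal hw, EReal.coe_lt_coe_iff]
  filter_upwards [(hφ.lsc w c hlt).filter_mono nhdsWithin_le_nhds, self_mem_nhdsWithin]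
    with v hv hv0
  exact EReal.coe_lt_coe_iff.1 (hv.trans_eq (hφ.coe_toReal hv0).symm)

lemma exists_forall_mul_sub_le (y : ℝ) :
    ∃ z : ℝ, 0 ≤ z ∧ ∀ w : ℝ, 0 ≤ w → y * w - (φ w).toReal ≤ y * z - (φ z).toReal := by
  obtain ⟨N, hN⟩ := hφ.superlinear (y + |y|)
  set R := max N 1
  have hone : (1 : ℝ) ∈ Set.Icc 0 R := ⟨zero_le_one, le_max_right N 1⟩
  have hlsc : LowerSemicontinuousOn (fun w => (φ w).toReal + -(y * w)) (Set.Icc 0 R) :=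
    (hφ.lowerSemicontinuousOn_toReal.mono Set.Icc_subset_Ici_self).add
      ((continuous_const_mul y).neg.lowerSemicontinuous.lowerSemicontinuousOn _)
  obtain ⟨z, hz, hmin⟩ := hlsc.exists_isMinOn ⟨1, hone⟩ isCompact_Icc
  have hmax : ∀ w ∈ Set.Icc 0 R, y * w - (φ w).toReal ≤ y * z - (φ z).toReal := fun w hw => by
    linarith [isMinOn_iff.1 hmin w hw]
  refine ⟨z, hz.1, fun w hw => ?_⟩
  rcases le_total w R with hwR | hRw
  · exact hmax w ⟨hw, hwR⟩
  · calc y * w - (φ w).toReal ≤ -(|y| * w) := by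
          have hgrowth := hN w ((le_max_left N 1).trans hRw)
          rw [← hφ.coe_toReal hw, EReal.coe_le_coe_iff] at hgrowth
          linarith
      _ ≤ -|y| := neg_le_neg (le_mul_of_one_le_right (abs_nonneg y) (hone.2.trans hRw))
      _ ≤ y * 1 - (φ 1).toReal := by linarith [neg_abs_le y, hφ.toReal_one]
      _ ≤ y * z - (φ z).toReal := hmax 1 hone

lemma psiR_eq_of_forall_le {y z : ℝ} (hz : 0 ≤ z)
    (hmax : ∀ w : ℝ, 0 ≤ w → y * w - (φ w).toReal ≤ y * z - (φ z).toReal) :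
    psiR φ y = y * z - (φ z).toReal := by
  suffices psiE φ y = ((y * z - (φ z).toReal : ℝ) : EReal) by rw [psiR, this, EReal.toReal_coe]
  refine le_antisymm (iSup_le fun w => ?_) ?_
  · rcases lt_or_ge w 0 with hw | hw
    · simp [hφ.eq_top_of_neg hw]
    · rw [← hφ.coe_toReal hw, ← EReal.coe_sub, EReal.coe_le_coe_iff]
      exact hmax w hw
  · rw [EReal.coe_sub, hφ.coe_toReal hz]
    exact le_iSup (fun w : ℝ => ((y * w : ℝ) : EReal) - φ w) z

lemma exists_psiR_eq (y : ℝ) : ∃ z : ℝ, 0 ≤ z ∧ psiR φ y = y * z - (φ z).toReal := by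
  obtain ⟨z, hz, hmax⟩ := hφ.exists_forall_mul_sub_le y
  exact ⟨z, hz, hφ.psiR_eq_of_forall_le hz hmax⟩

lemma mul_sub_toReal_le_psiR (y : ℝ) {w : ℝ} (hw : 0 ≤ w) : y * w - (φ w).toReal ≤ psiR φ y := by
  obtain ⟨z, hz, hmax⟩ := hφ.exists_forall_mul_sub_le y
  exact hφ.psiR_eq_of_forall_le hz hmax ▸ hmax w hw

lemma monotone_psiR : Monotone (psiR φ) := fun x y hxy => by
  obtain ⟨z, hz, hxz⟩ := hφ.exists_psiR_eq x
  grw [hxz, hxy]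
  exact hφ.mul_sub_toReal_le_psiR y hz

lemma le_psiR (y : ℝ) : y ≤ psiR φ y := by
  simpa [hφ.toReal_one] using hφ.mul_sub_toReal_le_psiR y zero_le_one

lemma convexOn_psiR : ConvexOn ℝ Set.univ (psiR φ) := by
  refine ⟨convex_univ, fun x _ y _ a b ha hb hab => ?_⟩
  obtain ⟨z, hz, hxyz⟩ := hφ.exists_psiR_eq (a • x + b • y)
  calc psiR φ (a • x + b • y)
      = a • (x * z - (φ z).toReal) + b • (y * z - (φ z).toReal) := by
        rw [hxyz]
        simp only [smul_eq_mul]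
        linear_combination (φ z).toReal * hab
    _ ≤ a • psiR φ x + b • psiR φ y := by
        gcongr <;> exact hφ.mul_sub_toReal_le_psiR _ hz

lemma isSubgradientAt_psiR {y z : ℝ} (hz : 0 ≤ z) (hyz : psiR φ y = y * z - (φ z).toReal) :
    IsSubgradientAt (psiR φ) z y := fun w => by
  linarith [hφ.mul_sub_toReal_le_psiR w hz]

lemma psiR_eq_mul_deriv_sub {y : ℝ} (hd : DifferentiableAt ℝ (psiR φ) y) :
    psiR φ y = y * deriv (psiR φ) y - (φ (deriv (psiR φ) y)).toReal := by
  obtain ⟨z, hz, hyz⟩ := hφ.exists_psiR_eq y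
  rwa [← (hφ.isSubgradientAt_psiR hz hyz).eq_deriv hd]

lemma isSubderivative_deriv_psiR (hd : Differentiable ℝ (psiR φ)) :
    IsSubderivative (psiR φ) (deriv (psiR φ)) := fun y => by
  obtain ⟨z, hz, hyz⟩ := hφ.exists_psiR_eq y
  have hsub := hφ.isSubgradientAt_psiR hz hyz
  exact hsub.eq_deriv (hd y) ▸ hsub

end IsDivergenceFunction

section OrliczHeart

variable {P : Measure Ω} {φ : ℝ → EReal} {X : Ω → ℝ}

/-- Membership of `X` in the Orlicz heart `M^ψ` of the conjugate `ψ = psiR φ`. As `ψ y ≥ y` for a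
divergence function `φ`, the condition `E[ψ (t * |X|)] < ∞` amounts to integrability. -/
def MemOrliczHeart (φ : ℝ → EReal) (X : Ω → ℝ) (P : Measure Ω) : Prop :=
  AEStronglyMeasurable X P ∧ ∀ t : ℝ, 0 < t → Integrable (fun ω => psiR φ (t * |X ω|)) P

namespace MemOrliczHeart

lemma integrable (hX : MemOrliczHeart φ X P) (hφ : IsDivergenceFunction φ) : Integrable X P :=
  (hX.2 1 one_pos).mono' hX.1 (.of_forall fun ω => by simpa using hφ.le_psiR |X ω|)

lemma integrable_psiR_mul_sub [IsFiniteMeasure P] (hX : MemOrliczHeart φ X P)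
    (hφ : IsDivergenceFunction φ) (s m : ℝ) : Integrable (fun ω => psiR φ (X ω * s - m)) P := by
  have hlower : Integrable (fun ω => X ω * s - m) P :=
    ((hX.integrable hφ).mul_const s).sub (integrable_const m)
  have hupper : Integrable (fun ω => (1 / 2 : ℝ) • psiR φ (2 * (|s| + 1) * |X ω|) +
      (1 / 2 : ℝ) • psiR φ (2 * -m)) P :=
    ((hX.2 _ (by positivity)).smul (1 / 2 : ℝ)).add (integrable_const _)
  refine integrable_of_le_of_le
    (hφ.monotone_psiR.measurable.comp_aemeasurable hlower.aemeasurable).aestronglyMeasurable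
    (.of_forall fun ω => hφ.le_psiR _) (.of_forall fun ω => ?_) hlower hupper
  refine le_trans (hφ.monotone_psiR ?_) (hφ.convexOn_psiR.2 (Set.mem_univ _) (Set.mem_univ _)
    (by norm_num) (by norm_num) (by norm_num))
  have hprod : X ω * s ≤ |X ω| * |s| := by rw [← abs_mul]; exact le_abs_self _
  simp only [smul_eq_mul]
  linarith [abs_nonneg (X ω)]

lemma integrable_psiR_div_sub [IsFiniteMeasure P] (hX : MemOrliczHeart φ X P)
    (hφ : IsDivergenceFunction φ) (t m : ℝ) : Integrable (fun ω => psiR φ (X ω / t - m)) P := by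
  simpa only [div_eq_mul_inv] using hX.integrable_psiR_mul_sub hφ t⁻¹ m

end MemOrliczHeart

end OrliczHeart

section Optimality

variable {P : Measure Ω} {φ : ℝ → EReal} {β : ℝ} {X : Ω → ℝ}

lemma mul_le_add_integral_of_le_rhoDiv {v : ℝ} (hv : (v : EReal) ≤ rhoDiv φ β P X) {s : ℝ}
    (hs : 0 < s) {m : ℝ} (hint : Integrable (fun ω => psiR φ (X ω * s - m)) P) :
    v * s ≤ β + m + ∫ ω, psiR φ (X ω * s - m) ∂P := by
  have hle : (v : EReal) ≤ rhoObj φ β P X m s⁻¹ :=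
    hv.trans (iInf_le_of_le m (iInf₂_le s⁻¹ (inv_pos.2 hs)))
  rw [rhoObj, if_pos (by simpa only [div_inv_eq_mul] using hint)] at hle
  simpa only [div_inv_eq_mul, EReal.coe_le_coe_iff, inv_mul_eq_div, le_div_iff₀ hs] using hle

variable [IsProbabilityMeasure P] (hφ : IsDivergenceFunction φ) (hX : MemOrliczHeart φ X P)
  {μ t : ℝ} (hopt : rhoObj φ β P X μ t = rhoDiv φ β P X) (ht : 0 < t) {g : ℝ → ℝ}
  (hg : IsSubderivative (psiR φ) g)
  (hd : ∀ᵐ ω ∂P, DifferentiableAt ℝ (psiR φ) (X ω / t - μ))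
include hφ hX hopt

lemma mul_mul_le_of_rhoObj_eq_rhoDiv {s : ℝ} (hs : 0 < s) (m : ℝ) :
    t * (β + μ + ∫ ω, psiR φ (X ω / t - μ) ∂P) * s ≤ β + m + ∫ ω, psiR φ (X ω * s - m) ∂P := by
  refine mul_le_add_integral_of_le_rhoDiv ?_ hs (hX.integrable_psiR_mul_sub hφ s m)
  rw [← hopt, rhoObj, if_pos (hX.integrable_psiR_div_sub hφ t μ)]

include ht hg hd

lemma integral_subderivative_eq_one :
    Integrable (fun ω => g (X ω / t - μ)) P ∧ ∫ ω, g (X ω / t - μ) ∂P = 1 := by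
  have hshift (k : ℝ) (ω : Ω) : X ω / t - μ + k * 1 = X ω * t⁻¹ - (μ - k) := by ring
  suffices hmin : IsLocalMin
      (fun k : ℝ => ∫ ω, psiR φ (X ω / t - μ + k * 1) ∂P - k * 1) 0 by
    simpa only [mul_one] using hg.integral_mul_eq_of_isLocalMin
      (((hX.integrable hφ).aemeasurable.div_const t).sub_const μ) aemeasurable_const
      (fun k => by simpa only [hshift] using hX.integrable_psiR_mul_sub hφ t⁻¹ (μ - k)) hd hmin
  refine .of_forall fun k => ?_
  have hle := mul_mul_le_of_rhoObj_eq_rhoDiv hφ hX hopt (inv_pos.2 ht) (μ - k)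
  rw [mul_right_comm, mul_inv_cancel₀ ht.ne', one_mul] at hle
  simp only [← hshift, zero_mul, add_zero, sub_zero] at hle ⊢
  linarith

lemma integral_subderivative_mul_eq :
    Integrable (fun ω => g (X ω / t - μ) * X ω) P ∧
      ∫ ω, g (X ω / t - μ) * X ω ∂P = t * (β + μ + ∫ ω, psiR φ (X ω / t - μ) ∂P) := by
  have hXm := (hX.integrable hφ).aemeasurable
  have hscale (k : ℝ) (ω : Ω) : X ω / t - μ + k * X ω = X ω * (t⁻¹ + k) - μ := by ring
  refine hg.integral_mul_eq_of_isLocalMin ((hXm.div_const t).sub_const μ) hXm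
    (fun k => by simpa only [hscale] using hX.integrable_psiR_mul_sub hφ (t⁻¹ + k) μ) hd ?_
  filter_upwards [Ioi_mem_nhds (neg_lt_zero.2 (inv_pos.2 ht))] with k hk
  have hle := mul_mul_le_of_rhoObj_eq_rhoDiv hφ hX hopt (neg_lt_iff_pos_add'.1 hk) μ
  rw [mul_add, mul_right_comm, mul_inv_cancel₀ ht.ne', one_mul] at hle
  simp only [← hscale, zero_mul, add_zero, sub_zero] at hle ⊢
  linarith

end Optimality

theorem characterizing_equations_solvable_general {P : Measure Ω} [IsProbabilityMeasure P]
    {φ : ℝ → EReal} (hφ : IsDivergenceFunction φ) {β : ℝ} {X : Ω → ℝ} (hX : MemOrliczHeart φ X P)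
    {μ t : ℝ} (hopt : rhoObj φ β P X μ t = rhoDiv φ β P X) (ht : 0 < t) {ψ' : ℝ → ℝ}
    (hψ' : IsSubderivative (psiR φ) ψ')
    (hd : ∀ᵐ ω ∂P, DifferentiableAt ℝ (psiR φ) (X ω / t - μ)) :
    Integrable (fun ω => ψ' (X ω / t - μ)) P ∧
      ∫ ω, ψ' (X ω / t - μ) ∂P = 1 ∧
      Integrable (fun ω => (φ (ψ' (X ω / t - μ))).toReal) P ∧
      ∫ ω, (φ (ψ' (X ω / t - μ))).toReal ∂P = β := by
  obtain ⟨hgY, hone⟩ := integral_subderivative_eq_one hφ hX hopt ht hψ' hd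
  obtain ⟨hgX, hvalue⟩ := integral_subderivative_mul_eq hφ hX hopt ht hψ' hd
  have hψY : Integrable (fun ω => psiR φ (X ω / t - μ)) P := hX.integrable_psiR_div_sub hφ t μ
  have hfenchel : (fun ω => (φ (ψ' (X ω / t - μ))).toReal) =ᵐ[P] fun ω =>
      ψ' (X ω / t - μ) * X ω / t - μ * ψ' (X ω / t - μ) - psiR φ (X ω / t - μ) := by
    filter_upwards [hd] with ω hω
    rw [(hψ' _).eq_deriv hω, hφ.psiR_eq_mul_deriv_sub hω]
    ring
  have hsub : Integrable (fun ω => ψ' (X ω / t - μ) * X ω / t - μ * ψ' (X ω / t - μ)) P :=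
    (hgX.div_const t).sub (hgY.const_mul μ)
  refine ⟨hgY, hone, (hsub.sub hψY).congr hfenchel.symm, ?_⟩
  rw [integral_congr_ae hfenchel, integral_sub hsub hψY,
    integral_sub (hgX.div_const t) (hgY.const_mul μ), integral_div, integral_const_mul, hone,
    hvalue, mul_div_cancel_left₀ _ ht.ne']
  ring

/-- Solvability of the characterizing equations: let `X ∈ M^ψ`, `X ≥ 0` a.s.,
`φ ∈ Δ₂`, and suppose the infimum defining `ρ_{φ,β}(X)` is attained at `t > 0`, `μ`.
If `ψ` is differentiable, then `E[ψ′(X/t − μ)] = 1` and `E[φ(ψ′(X/t − μ))] = β` for the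
derivative `ψ′`; if `X` is continuously distributed, the same equations hold for every
subderivative `ψ′` of `ψ`. -/
theorem characterizing_equations_solvable (P : Measure Ω) [IsProbabilityMeasure P]
    (φ : ℝ → EReal) (hφ : IsDivergenceFunction φ) (hΔ : DeltaTwo φ) (β : ℝ) (hβ : 0 < β)
    (X : Ω → ℝ) (hX : Integrable X P) (hX0 : ∀ᵐ ω ∂P, 0 ≤ X ω)
    (hXM : ∀ t : ℝ, 0 < t → Integrable (fun ω => psiR φ (t * |X ω|)) P)
    (μ t : ℝ) (ht : 0 < t) (hopt : rhoObj φ β P X μ t = rhoDiv φ β P X) :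
    (Differentiable ℝ (psiR φ) →
      (Integrable (fun ω => deriv (psiR φ) (X ω / t - μ)) P ∧
       (∫ ω, deriv (psiR φ) (X ω / t - μ) ∂P) = 1 ∧
       Integrable (fun ω => (φ (deriv (psiR φ) (X ω / t - μ))).toReal) P ∧
       (∫ ω, (φ (deriv (psiR φ) (X ω / t - μ))).toReal ∂P) = β)) ∧
    ((∀ x : ℝ, P {ω | X ω = x} = 0) →
      ∀ ψ' : ℝ → ℝ, (∀ x z : ℝ, ψ' x * (z - x) ≤ psiR φ z - psiR φ x) →
        (Integrable (fun ω => ψ' (X ω / t - μ)) P ∧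
         (∫ ω, ψ' (X ω / t - μ) ∂P) = 1 ∧
         Integrable (fun ω => (φ (ψ' (X ω / t - μ))).toReal) P ∧
         (∫ ω, (φ (ψ' (X ω / t - μ))).toReal ∂P) = β)) := by
  have hM : MemOrliczHeart φ X P := ⟨hX.aestronglyMeasurable, hXM⟩
  exact ⟨fun hdiff => characterizing_equations_solvable_general hφ hM hopt ht
      (hφ.isSubderivative_deriv_psiR hdiff) (.of_forall fun _ => hdiff _),
    fun hcont _ hψ' => characterizing_equations_solvable_general hφ hM hopt ht hψ'
      (IsSubderivative.ae_differentiableAt_div_sub hψ' hcont ht.ne' μ)⟩
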